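/- (Cantor–Bernstein for σ-embeddability.) Let X and Y be topological spaces. If X is σ-embeddable into Y and Y is σ-embeddable into X, then X and Y are σ-homeomorphic. -/

import Mathlib

/-!
The covers in a σ-homeomorphism need not be disjoint, so no back-and-forth argument is needed.
If the `A n` cover `X` with `A n ≃ₜ B n ⊆ Y`, and the `C n` cover `Y` with `C n ≃ₜ D n ⊆ X`, then
the `A n` together with the `D n` cover `X`, the `B n` together with the `C n` cover `Y`, and
corresponding pieces are homeomorphic.
-/

open Set

/-- `X` is σ-embeddable into `Y`: `X` is a countable union of subsets each of which
(with the subspace topology) is homeomorphic to a subspace of `Y`. -/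
def SigmaEmbeddable (X : Type*) (Y : Type*) [TopologicalSpace X] [TopologicalSpace Y] : Prop :=
  ∃ A : ℕ → Set X, (⋃ n, A n) = univ ∧ ∀ n, ∃ B : Set Y, Nonempty (↥(A n) ≃ₜ ↥B)

/-- `X` and `Y` are σ-homeomorphic: there are countable covers `(A n)` of `X` and `(B n)`
of `Y` such that `A n` (with subspace topology) is homeomorphic to `B n` for every `n`. -/
def SigmaHomeomorphic (X : Type*) (Y : Type*) [TopologicalSpace X] [TopologicalSpace Y] : Prop :=
  ∃ (A : ℕ → Set X) (B : ℕ → Set Y),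
    (⋃ n, A n) = univ ∧ (⋃ n, B n) = univ ∧ ∀ n, Nonempty (↥(A n) ≃ₜ ↥(B n))

theorem SigmaHomeomorphic.of_countable {X Y : Type*} [TopologicalSpace X] [TopologicalSpace Y]
    {ι : Sort*} [Countable ι] {A : ι → Set X} {B : ι → Set Y} (hA : ⋃ i, A i = univ)
    (hB : ⋃ i, B i = univ) (hAB : ∀ i, Nonempty (A i ≃ₜ B i)) : SigmaHomeomorphic X Y := by
  cases isEmpty_or_nonempty ι with
  | inl _ =>
    rw [iUnion_of_empty] at hA hB
    exact ⟨fun _ => ∅, fun _ => ∅, by rwa [iUnion_empty], by rwa [iUnion_empty],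
      fun _ => ⟨.empty⟩⟩
  | inr _ =>
    obtain ⟨f, hf⟩ := exists_surjective_nat ι
    exact ⟨A ∘ f, B ∘ f, (hf.iUnion_comp A).trans hA, (hf.iUnion_comp B).trans hB,
      fun n => hAB (f n)⟩

/-- Cantor–Bernstein for σ-embeddability. -/
theorem stmt2 (X Y : Type*) [TopologicalSpace X] [TopologicalSpace Y]
    (h₁ : SigmaEmbeddable X Y) (h₂ : SigmaEmbeddable Y X) :
    SigmaHomeomorphic X Y := by
  obtain ⟨A, hA, hAB⟩ := h₁
  obtain ⟨C, hC, hCD⟩ := h₂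
  choose B hB using hAB
  choose D hD using hCD
  have hAD : ⋃ i, Sum.elim A D i = univ := by simp [iUnion_sum, hA]
  have hBC : ⋃ i, Sum.elim B C i = univ := by simp [iUnion_sum, hC]
  refine .of_countable hAD hBC ?_
  rintro (m | n)
  · exact hB m
  · exact (hD n).map Homeomorph.symm
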